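/- Let x be a uniformly recurrent infinite word over a finite alphabet A and let u and v be nonempty prefixes of x with |v| ≤ |u|. Then every return to u in x is a concatenation of returns to v in x; that is, for every w ∈ Ret_x(u) there exist w_1, …, w_m ∈ Ret_x(v) with w = w_1 w_2 ⋯ w_m. -/

import Mathlib

/-- The factor of the infinite word `x` of length `n` starting at position `i`,
i.e. the word `x_i x_{i+1} ⋯ x_{i+n-1}`. -/
def seg {A : Type*} (x : ℕ → A) (i n : ℕ) : List A :=
  (List.range n).map fun k => x (i + k)

/-- `u` is a (nonempty, finite) factor of the infinite word `x`. -/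
def IsFactor {A : Type*} (x : ℕ → A) (u : List A) : Prop :=
  u ≠ [] ∧ ∃ i, u = seg x i u.length

/-- `u` is a (finite) prefix of the infinite word `x`. -/
def IsPrefixOf {A : Type*} (x : ℕ → A) (u : List A) : Prop :=
  u = seg x 0 u.length

/-- The finite word `u` occurs in the finite word `v` at position `i`. -/
def OccursAt {A : Type*} (u v : List A) (i : ℕ) : Prop :=
  i + u.length ≤ v.length ∧ (v.drop i).take u.length = u

/-- `w` is a return word to `u` in `x`: `w` is nonempty, `w ++ u` is a factor of
`x`, and `u` occurs exactly twice in `w ++ u`. -/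
def IsReturn {A : Type*} (x : ℕ → A) (u w : List A) : Prop :=
  w ≠ [] ∧ IsFactor x (w ++ u) ∧ {i | OccursAt u (w ++ u) i}.ncard = 2

/-- The set of return words to `u` in `x`. -/
def Ret {A : Type*} (x : ℕ → A) (u : List A) : Set (List A) :=
  {w | IsReturn x u w}

/-- `x` is uniformly recurrent: every factor has a nonempty and finite set of
return words. -/
def UniformlyRecurrent {A : Type*} (x : ℕ → A) : Prop :=
  ∀ u, IsFactor x u → (Ret x u).Nonempty ∧ (Ret x u).Finite

/-- `x` is aperiodic: there is no `n ≥ 1` with `x (i + n) = x i` for all `i`. -/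
def Aperiodic {A : Type*} (x : ℕ → A) : Prop :=
  ¬ ∃ n : ℕ, 1 ≤ n ∧ ∀ i : ℕ, x (i + n) = x i

/-!
The final copy of `u` in `w ++ u` is one of its two occurrences, so `w` is a return to `u` exactly
when `u` occurs once in `w ++ u` at a position smaller than `|w|`. If `v` is a prefix of `u`, then
`v` also occurs in `w ++ v` at such a position. Should it do so at two positions `j < k < |w|`,
cutting `w` at `k` leaves two shorter nonempty words, each again followed in `x` by `v` and with an
earlier occurrence of `v` (at `j` and at `0`), and strong induction on the length of `w` concludes.
-/

section Seg

variable {A : Type*} (x : ℕ → A)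

theorem length_seg (i n : ℕ) : (seg x i n).length = n := by
  simp [seg]

theorem seg_add (i m n : ℕ) : seg x i (m + n) = seg x i m ++ seg x (i + m) n := by
  simp [seg, List.range_add, Function.comp_def, Nat.add_assoc]

theorem seg_prefix_seg (i : ℕ) {m n : ℕ} (h : m ≤ n) : seg x i m <+: seg x i n := by
  obtain ⟨k, rfl⟩ := Nat.exists_eq_add_of_le h
  exact seg_add x i m k ▸ List.prefix_append _ _

end Seg

section FactorsAndReturns

variable {A : Type*} {x : ℕ → A} {u v w y z : List A} {i k : ℕ}

theorem IsPrefixOf.prefix_of_length_le (hv : IsPrefixOf x v) (hu : IsPrefixOf x u)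
    (h : v.length ≤ u.length) : v <+: u := by
  rw [hv, hu]
  exact seg_prefix_seg x 0 h

theorem IsFactor.of_infix (hy : IsFactor x y) (hzy : z <:+: y) (hz : z ≠ []) :
    IsFactor x z := by
  obtain ⟨a, b, rfl⟩ := hzy
  obtain ⟨-, i, hi⟩ := hy
  rw [List.length_append, List.length_append, seg_add, seg_add] at hi
  have haz := List.append_inj_left hi (by simp [length_seg])
  exact ⟨hz, i + a.length, List.append_inj_right haz (length_seg x i _).symm⟩

theorem occursAt_iff_prefix_drop :
    OccursAt u y i ↔ i + u.length ≤ y.length ∧ u <+: y.drop i := by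
  rw [OccursAt, List.prefix_iff_eq_take, eq_comm (a := u)]

theorem OccursAt.of_prefix (h : OccursAt u y i) (hv : v <+: u) (hz : z <+: y)
    (hle : i + v.length ≤ z.length) : OccursAt v z i := by
  rw [occursAt_iff_prefix_drop] at h ⊢
  refine ⟨hle, List.prefix_of_prefix_length_le (hv.trans h.2) (hz.drop i) ?_⟩
  rw [List.length_drop]
  omega

/-- The positions at which `u` occurs in `w ++ u`, apart from the position `w.length` of the final
copy of `u`. Return words to `u` are those `w` for which there is exactly one such position; it
need not be `0`, because `IsReturn` does not ask `w ++ u` to begin with `u`. -/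
def nonfinalOccurrences (u w : List A) : Set ℕ :=
  {i | i < w.length ∧ OccursAt u (w ++ u) i}

theorem setOf_occursAt_append (u w : List A) :
    {i | OccursAt u (w ++ u) i} = insert w.length (nonfinalOccurrences u w) := by
  ext i
  have hfinal : OccursAt u (w ++ u) w.length := by simp [OccursAt]
  have hle (h : OccursAt u (w ++ u) i) : i ≤ w.length := by
    simpa using h.1
  simp only [nonfinalOccurrences, Set.mem_insert_iff, Set.mem_ofPred_eq]
  constructor
  · exact fun h => (hle h).eq_or_lt.imp_right fun hlt => ⟨hlt, h⟩
  · rintro (rfl | ⟨-, h⟩)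
    exacts [hfinal, h]

theorem mem_ret_iff :
    w ∈ Ret x u ↔ IsFactor x (w ++ u) ∧ ∃ i, nonfinalOccurrences u w = {i} := by
  have hfin : (nonfinalOccurrences u w).Finite := (Set.finite_lt_nat w.length).subset fun _ h => h.1
  have hfinal : w.length ∉ nonfinalOccurrences u w := fun h => h.1.false
  have hcard : {i | OccursAt u (w ++ u) i}.ncard = 2 ↔ ∃ i, nonfinalOccurrences u w = {i} := by
    rw [setOf_occursAt_append, Set.ncard_insert_of_notMem hfinal hfin]
    exact Nat.succ_inj.trans Set.ncard_eq_one
  rw [← hcard]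
  refine ⟨fun h => h.2, fun h => ⟨?_, h⟩⟩
  rintro rfl
  obtain ⟨i, hi⟩ := hcard.1 h.2
  exact Nat.not_lt_zero i (hi.ge rfl).1

theorem nonfinalOccurrences_subset_of_prefix (hvu : v <+: u) (w : List A) :
    nonfinalOccurrences u w ⊆ nonfinalOccurrences v w := fun i hi =>
  ⟨hi.1, hi.2.of_prefix hvu ((List.prefix_append_right_inj w).2 hvu) (by simp [hi.1.le])⟩

theorem exists_append_of_mem_nonfinalOccurrences (hk : k ∈ nonfinalOccurrences v w) :
    ∃ w₁ w₂, w₁ ++ w₂ = w ∧ w₁.length = k ∧ w₂ ≠ [] ∧ v <+: w₂ ++ v := by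
  obtain ⟨hlt, hocc⟩ := hk
  refine ⟨w.take k, w.drop k, List.take_append_drop k w, ?_, ?_, ?_⟩
  · exact List.length_take_of_le hlt.le
  · simpa using hlt
  · rw [← List.drop_append_of_le_length hlt.le]
    exact (occursAt_iff_prefix_drop.1 hocc).2

theorem zero_mem_nonfinalOccurrences (hw : w ≠ []) (h : v <+: w ++ v) :
    0 ∈ nonfinalOccurrences v w :=
  ⟨List.length_pos_iff.2 hw, occursAt_iff_prefix_drop.2 ⟨by simp, h⟩⟩

end FactorsAndReturns

section Returns

variable {A : Type*} {x : ℕ → A} {v : List A}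

theorem exists_flatten_eq_of_nonfinalOccurrences_nonempty (w : List A)
    (hfac : IsFactor x (w ++ v)) (hocc : (nonfinalOccurrences v w).Nonempty) :
    ∃ l : List (List A), (∀ z ∈ l, z ∈ Ret x v) ∧ l.flatten = w := by
  induction hn : w.length using Nat.strong_induction_on generalizing w with
  | _ n ih =>
  subst hn
  obtain hsingle | hmany := hocc.exists_eq_singleton_or_nontrivial
  · exact ⟨[w], by simpa using mem_ret_iff.2 ⟨hfac, hsingle⟩, by simp⟩
  obtain ⟨j, hj, k, hk, hjk⟩ := hmany.exists_lt
  obtain ⟨w₁, w₂, rfl, rfl, hw₂, hpre⟩ := exists_append_of_mem_nonfinalOccurrences hk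
  have hw₁ : w₁ ≠ [] := List.length_pos_iff.1 (Nat.zero_lt_of_lt hjk)
  have hpre₁ : w₁ ++ v <+: w₁ ++ w₂ ++ v := by
    rwa [List.append_assoc, List.prefix_append_right_inj]
  have hsuf₂ : w₂ ++ v <:+ w₁ ++ w₂ ++ v := by
    rw [List.append_assoc]
    exact List.suffix_append _ _
  have hj₁ : j ∈ nonfinalOccurrences v w₁ :=
    ⟨hjk, hj.2.of_prefix List.prefix_rfl hpre₁ (by simp [hjk.le])⟩
  obtain ⟨l₁, hl₁, rfl⟩ := ih _ (by simpa using List.length_pos_iff.2 hw₂) w₁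
    (hfac.of_infix hpre₁.isInfix (List.append_ne_nil_of_left_ne_nil hw₁ v)) ⟨j, hj₁⟩ rfl
  obtain ⟨l₂, hl₂, rfl⟩ := ih _ (by simpa using List.length_pos_iff.2 hw₁) w₂
    (hfac.of_infix hsuf₂.isInfix (List.append_ne_nil_of_left_ne_nil hw₂ v))
    ⟨0, zero_mem_nonfinalOccurrences hw₂ hpre⟩ rfl
  exact ⟨l₁ ++ l₂, List.forall_mem_append.2 ⟨hl₁, hl₂⟩, List.flatten_append⟩

theorem stmt7_general {u w : List A} (hvu : v <+: u) (hw : w ∈ Ret x u) :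
    ∃ l : List (List A), (∀ z ∈ l, z ∈ Ret x v) ∧ l.flatten = w := by
  obtain ⟨hfac, i, hi⟩ := mem_ret_iff.1 hw
  have hocc : i ∈ nonfinalOccurrences v w := nonfinalOccurrences_subset_of_prefix hvu w (hi.ge rfl)
  have hpre : w ++ v <+: w ++ u := (List.prefix_append_right_inj w).2 hvu
  exact exists_flatten_eq_of_nonfinalOccurrences_nonempty w
    (hfac.of_infix hpre.isInfix (List.append_ne_nil_of_left_ne_nil hw.1 v)) ⟨i, hocc⟩

end Returns

/-- Let `x` be a uniformly recurrent infinite word over a finite alphabet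
and let `u`, `v` be nonempty prefixes of `x` with `|v| ≤ |u|`. Then every return word to
`u` in `x` is a concatenation of return words to `v` in `x`. -/
theorem stmt7 {A : Type*} [Fintype A] (x : ℕ → A) (hUR : UniformlyRecurrent x)
    (u v : List A) (hu : u ≠ []) (hv : v ≠ [])
    (hupref : IsPrefixOf x u) (hvpref : IsPrefixOf x v)
    (hlen : v.length ≤ u.length)
    (w : List A) (hw : w ∈ Ret x u) :
    ∃ l : List (List A), (∀ z ∈ l, z ∈ Ret x v) ∧ l.flatten = w :=
  stmt7_general (hvpref.prefix_of_length_le hupref hlen) hw
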